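/- arXiv:2403.08168 — 2 statements merged into one kernel-verified Lean document; each statement's English description precedes it below -/
import Mathlib

section
/- Let Δ > 0, K ≥ 1, and let X, Y be real n₁×n₂ matrices with ‖X - Y‖_max ≤ (K-1)Δ. Let (i₁,j₁),…,(i_{m'},j_{m'}) be i.i.d. indices uniformly distributed on [n₁]×[n₂] and τ₁,…,τ_{m'} be i.i.d. uniform on [-Δ/2, Δ/2], independent of the indices. Then for every ε > 0, P( | (1/m') Σ_{k=1}^{m'} |Q_Δ(X_{i_k,j_k} + τ_k) - Q_Δ(Y_{i_k,j_k} + τ_k)| − (1/(n₁n₂)) ‖X - Y‖₁ | ≥ ε ) ≤ 2 exp( −2 ε² m' / (K² Δ²) ). -/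
open MeasureTheory ProbabilityTheory

/-- The uniform quantizer `Q_Δ(t) = Δ(⌊t/Δ⌋ + 1/2)`. -/
noncomputable def uniformQuantizer (Δ : ℝ) (t : ℝ) : ℝ :=
  Δ * ((⌊t / Δ⌋ : ℤ) + 1 / 2)

/-- The uniform probability measure on the interval `[-Δ/2, Δ/2]`. -/
noncomputable def uniformDither (Δ : ℝ) : Measure ℝ :=
  (ENNReal.ofReal Δ)⁻¹ • volume.restrict (Set.Icc (-(Δ / 2)) (Δ / 2))

/-- The uniform probability measure on the finite index set `Fin n₁ × Fin n₂`. -/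
noncomputable def uniformIndex (n₁ n₂ : ℕ) : Measure (Fin n₁ × Fin n₂) :=
  ((n₁ * n₂ : ℕ) : ENNReal)⁻¹ • Measure.count

/-- The entrywise ℓ₁-norm of a real matrix. -/
noncomputable def matL1 {n₁ n₂ : ℕ} (X : Matrix (Fin n₁) (Fin n₂) ℝ) : ℝ :=
  ∑ i, ∑ j, |X i j|


lemma sq_int_fract (a : ℝ) : ∫ t in a..(a + 1), Int.fract t = 1 / 2 := by
  have hp : Function.Periodic (fun t : ℝ => Int.fract t) 1 := fun t => Int.fract_add_one t
  rw [hp.intervalIntegral_add_eq a 0]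
  rw [intervalIntegral.integral_congr_Ioo_of_le (g := fun t => t) (by norm_num)]
  · norm_num
  · intro t ht
    simp only [zero_add, Set.mem_Ioo] at ht
    exact Int.fract_eq_self.mpr ⟨ht.1.le, ht.2⟩

lemma sq_quant_eq {Δ : ℝ} (hΔ : 0 < Δ) (t : ℝ) :
    uniformQuantizer Δ t = t + (Δ / 2 - Δ * Int.fract (t / Δ)) := by
  unfold uniformQuantizer Int.fract
  field_simp
  ring

lemma sq_quant_meas (Δ : ℝ) : Measurable (uniformQuantizer Δ) := by
  unfold uniformQuantizer
  have h : Measurable (fun t : ℝ => ((⌊t / Δ⌋ : ℤ) : ℝ)) :=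
    measurable_from_top.comp (Int.measurable_floor.comp (measurable_id.div_const Δ))
  exact (h.add_const _).const_mul _

lemma sq_fract_intble (Δ x a b : ℝ) :
    IntervalIntegrable (fun t => Int.fract (x / Δ + t / Δ)) volume a b := by
  have hm : Measurable (fun t : ℝ => Int.fract (x / Δ + t / Δ)) :=
    measurable_fract.comp ((measurable_id.div_const Δ).const_add _)
  refine (intervalIntegrable_const (c := (1 : ℝ))).mono_fun hm.aestronglyMeasurable ?_
  refine Filter.Eventually.of_forall fun t => ?_
  simp only [Real.norm_eq_abs, abs_one, Int.abs_fract]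
  exact (Int.fract_lt_one _).le

lemma sq_quant_intble {Δ : ℝ} (hΔ : 0 < Δ) (x a b : ℝ) :
    IntervalIntegrable (fun t => uniformQuantizer Δ (x + t)) volume a b := by
  simp only [sq_quant_eq hΔ, add_div]
  exact (intervalIntegrable_const.add intervalIntegral.intervalIntegrable_id).add
    (intervalIntegrable_const.sub ((sq_fract_intble Δ x a b).const_mul Δ))

lemma sq_quant_int {Δ : ℝ} (hΔ : 0 < Δ) (x : ℝ) :
    ∫ t in (-(Δ / 2))..(Δ / 2), uniformQuantizer Δ (x + t) = Δ * x := by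
  simp only [sq_quant_eq hΔ, add_div]
  rw [intervalIntegral.integral_add
      (intervalIntegrable_const.add intervalIntegral.intervalIntegrable_id)
      (intervalIntegrable_const.sub ((sq_fract_intble Δ x _ _).const_mul Δ)),
    intervalIntegral.integral_add intervalIntegrable_const intervalIntegral.intervalIntegrable_id,
    intervalIntegral.integral_sub intervalIntegrable_const
      ((sq_fract_intble Δ x _ _).const_mul Δ),
    intervalIntegral.integral_const_mul,
    intervalIntegral.integral_comp_add_div (fun t => Int.fract t) hΔ.ne']
  have h : x / Δ + Δ / 2 / Δ = (x / Δ + -(Δ / 2) / Δ) + 1 := by field_simp; ring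
  rw [h, sq_int_fract]
  simp
  ring

lemma sq_quant_mono {Δ : ℝ} (hΔ : 0 < Δ) : Monotone (uniformQuantizer Δ) := by
  intro s t hst
  unfold uniformQuantizer
  have : (⌊s / Δ⌋ : ℝ) ≤ ⌊t / Δ⌋ := by
    exact_mod_cast Int.floor_le_floor (div_le_div_of_nonneg_right hst hΔ.le)
  gcongr

lemma sq_abs_int_of_le {Δ : ℝ} (hΔ : 0 < Δ) {x y : ℝ} (h : y ≤ x) :
    ∫ t in (-(Δ / 2))..(Δ / 2), |uniformQuantizer Δ (x + t) - uniformQuantizer Δ (y + t)|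
      = Δ * |x - y| := by
  have : ∀ t, |uniformQuantizer Δ (x + t) - uniformQuantizer Δ (y + t)|
      = uniformQuantizer Δ (x + t) - uniformQuantizer Δ (y + t) := fun t =>
    abs_of_nonneg (sub_nonneg.mpr (sq_quant_mono hΔ (by linarith)))
  simp only [this]
  rw [intervalIntegral.integral_sub (sq_quant_intble hΔ _ _ _) (sq_quant_intble hΔ _ _ _),
    sq_quant_int hΔ, sq_quant_int hΔ, abs_of_nonneg (sub_nonneg.mpr h)]
  ring

lemma sq_abs_int {Δ : ℝ} (hΔ : 0 < Δ) (x y : ℝ) :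
    ∫ t in (-(Δ / 2))..(Δ / 2), |uniformQuantizer Δ (x + t) - uniformQuantizer Δ (y + t)|
      = Δ * |x - y| := by
  rcases le_total y x with h | h
  · exact sq_abs_int_of_le hΔ h
  · rw [abs_sub_comm x y, ← sq_abs_int_of_le hΔ h]
    simp only [abs_sub_comm]

lemma sq_dither_int {Δ : ℝ} (hΔ : 0 < Δ) (x y : ℝ) :
    ∫ t, |uniformQuantizer Δ (x + t) - uniformQuantizer Δ (y + t)| ∂(uniformDither Δ)
      = |x - y| := by
  unfold uniformDither
  rw [integral_smul_measure, integral_Icc_eq_integral_Ioc,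
    ← intervalIntegral.integral_of_le (by linarith), sq_abs_int hΔ]
  simp [ENNReal.toReal_ofReal hΔ.le, hΔ.ne']

lemma sq_quant_bound {Δ K : ℝ} (hΔ : 0 < Δ) {x y : ℝ} (h : |x - y| ≤ (K - 1) * Δ) :
    |uniformQuantizer Δ x - uniformQuantizer Δ y| ≤ K * Δ := by
  rw [sq_quant_eq hΔ, sq_quant_eq hΔ]
  have h1 := Int.fract_nonneg (x / Δ)
  have h2 := (Int.fract_lt_one (x / Δ)).le
  have h3 := Int.fract_nonneg (y / Δ)
  have h4 := (Int.fract_lt_one (y / Δ)).le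
  rw [abs_le] at h ⊢
  constructor <;> nlinarith [mul_nonneg hΔ.le h1, mul_nonneg hΔ.le h3,
    mul_le_mul_of_nonneg_left h2 hΔ.le, mul_le_mul_of_nonneg_left h4 hΔ.le]

lemma sq_dither_prob {Δ : ℝ} (hΔ : 0 < Δ) : IsProbabilityMeasure (uniformDither Δ) := by
  constructor
  unfold uniformDither
  simp only [Measure.smul_apply, MeasurableSet.univ, Measure.restrict_apply, Set.univ_inter,
    Real.volume_Icc, smul_eq_mul]
  rw [show Δ / 2 - -(Δ / 2) = Δ by ring]
  exact ENNReal.inv_mul_cancel (by simpa using hΔ) ENNReal.ofReal_ne_top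

lemma sq_index_prob {n₁ n₂ : ℕ} (hn₁ : 0 < n₁) (hn₂ : 0 < n₂) :
    IsProbabilityMeasure (uniformIndex n₁ n₂) := by
  constructor
  unfold uniformIndex
  simp only [Measure.smul_apply, Measure.count_univ, smul_eq_mul, ENat.card_eq_coe_fintype_card,
    Fintype.card_prod, Fintype.card_fin]
  rw [ENat.toENNReal_coe]
  exact ENNReal.inv_mul_cancel (by simp [hn₁.ne', hn₂.ne']) (ENNReal.natCast_ne_top _)

/-- the summand as a function of the sample -/
noncomputable def sqF {n₁ n₂ : ℕ} (Δ : ℝ) (X Y : Matrix (Fin n₁) (Fin n₂) ℝ)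
    (w : (Fin n₁ × Fin n₂) × ℝ) : ℝ :=
  |uniformQuantizer Δ (X w.1.1 w.1.2 + w.2) - uniformQuantizer Δ (Y w.1.1 w.1.2 + w.2)|

lemma sqF_meas {n₁ n₂ : ℕ} (Δ : ℝ) (X Y : Matrix (Fin n₁) (Fin n₂) ℝ) :
    Measurable (sqF Δ X Y) := by
  have h : ∀ Z : Matrix (Fin n₁) (Fin n₂) ℝ,
      Measurable (fun w : (Fin n₁ × Fin n₂) × ℝ => uniformQuantizer Δ (Z w.1.1 w.1.2 + w.2)) := by
    intro Z
    have hZ : Measurable (fun p : Fin n₁ × Fin n₂ => Z p.1 p.2) := measurable_of_finite _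
    exact (sq_quant_meas Δ).comp ((hZ.comp measurable_fst).add measurable_snd)
  exact ((h X).sub (h Y)).abs

lemma sqF_mem {n₁ n₂ : ℕ} {Δ K : ℝ} (hΔ : 0 < Δ) {X Y : Matrix (Fin n₁) (Fin n₂) ℝ}
    (hmax : ∀ i j, |X i j - Y i j| ≤ (K - 1) * Δ) (w : (Fin n₁ × Fin n₂) × ℝ) :
    sqF Δ X Y w ∈ Set.Icc 0 (K * Δ) := by
  refine ⟨abs_nonneg _, sq_quant_bound hΔ ?_⟩
  simpa using hmax w.1.1 w.1.2

lemma sqF_int {n₁ n₂ : ℕ} (hn₁ : 0 < n₁) (hn₂ : 0 < n₂) {Δ K : ℝ} (hΔ : 0 < Δ)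
    {X Y : Matrix (Fin n₁) (Fin n₂) ℝ}
    (hmax : ∀ i j, |X i j - Y i j| ≤ (K - 1) * Δ) :
    ∫ w, sqF Δ X Y w ∂((uniformIndex n₁ n₂).prod (uniformDither Δ))
      = ((n₁ : ℝ) * n₂)⁻¹ * matL1 (X - Y) := by
  have := sq_dither_prob hΔ
  have := sq_index_prob hn₁ hn₂
  rw [integral_prod _ (Integrable.of_mem_Icc 0 (K * Δ) (sqF_meas Δ X Y).aemeasurable
    (Filter.Eventually.of_forall (sqF_mem hΔ hmax)))]
  simp only [sqF, sq_dither_int hΔ]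
  unfold uniformIndex matL1
  rw [integral_smul_measure, integral_count, Fintype.sum_prod_type]
  simp

/-- Hoeffding-type concentration of the sampled quantized ℓ₁ distance: if
`‖X - Y‖_max ≤ (K-1)Δ`, then for i.i.d. uniform indices and i.i.d. uniform dithers
independent of the indices (encoded by the i.i.d. family `W k = ((i_k,j_k), τ_k)` with
product distribution), for every `ε > 0`,
`P(|(1/m')Σ_k |Q_Δ(X+τ) - Q_Δ(Y+τ)| - ‖X-Y‖₁/(n₁n₂)| ≥ ε) ≤ 2 exp(-2ε²m'/(K²Δ²))`. -/
theorem sampled_quantized_l1_concentration {n₁ n₂ m' : ℕ} (hn₁ : 0 < n₁) (hn₂ : 0 < n₂)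
    (Δ K : ℝ) (hΔ : 0 < Δ) (hK : 1 ≤ K)
    (X Y : Matrix (Fin n₁) (Fin n₂) ℝ)
    (hmax : ∀ i j, |X i j - Y i j| ≤ (K - 1) * Δ)
    {Ω : Type*} [MeasurableSpace Ω] (P : Measure Ω) [IsProbabilityMeasure P]
    (W : Fin m' → Ω → (Fin n₁ × Fin n₂) × ℝ)
    (hmeas : ∀ k, Measurable (W k))
    (hindep : iIndepFun W P)
    (hdist : ∀ k, Measure.map (W k) P = (uniformIndex n₁ n₂).prod (uniformDither Δ))
    (ε : ℝ) (hε : 0 < ε) :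
    P {ω | ε ≤ |(m' : ℝ)⁻¹ * (∑ k : Fin m',
          |uniformQuantizer Δ (X (W k ω).1.1 (W k ω).1.2 + (W k ω).2)
            - uniformQuantizer Δ (Y (W k ω).1.1 (W k ω).1.2 + (W k ω).2)|)
        - ((n₁ : ℝ) * n₂)⁻¹ * matL1 (X - Y)|}
      ≤ ENNReal.ofReal (2 * Real.exp (-(2 * ε ^ 2 * m') / (K ^ 2 * Δ ^ 2))) := by
  rcases Nat.eq_zero_or_pos m' with hm | hm
  · subst hm
    refine prob_le_one.trans ?_
    simp
  have hmR : (0 : ℝ) < m' := by exact_mod_cast hm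
  set μ : ℝ := ((n₁ : ℝ) * n₂)⁻¹ * matL1 (X - Y) with hμ
  have hint : ∀ k, ∫ ω, sqF Δ X Y (W k ω) ∂P = μ := by
    intro k
    rw [hμ, ← sqF_int hn₁ hn₂ hΔ hmax, ← hdist k,
      integral_map (hmeas k).aemeasurable (sqF_meas Δ X Y).aestronglyMeasurable]
  set Z : Fin m' → Ω → ℝ := fun k ω => sqF Δ X Y (W k ω) - μ with hZ
  have hind : iIndepFun Z P :=
    hindep.comp (fun _ w => sqF Δ X Y w - μ) (fun _ => (sqF_meas Δ X Y).sub_const μ)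
  have hsub : ∀ k, HasSubgaussianMGF (Z k) ((‖K * Δ - 0‖₊ / 2) ^ 2) P := by
    intro k
    have h := hasSubgaussianMGF_of_mem_Icc (μ := P) (X := fun ω => sqF Δ X Y (W k ω))
      (a := 0) (b := K * Δ) ((sqF_meas Δ X Y).comp (hmeas k)).aemeasurable
      (Filter.Eventually.of_forall fun ω => sqF_mem hΔ hmax (W k ω))
    rw [hint k] at h
    exact h
  have hS := HasSubgaussianMGF.sum_of_iIndepFun hind (s := Finset.univ) (fun k _ => hsub k)
  have hε' : (0 : ℝ) ≤ m' * ε := by positivity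
  have hKΔ : 0 < K * Δ := by positivity
  have hexp : -(m' * ε) ^ 2 /
      (2 * ((∑ _k : Fin m', (‖K * Δ - 0‖₊ / 2) ^ 2 : NNReal) : ℝ))
      = -(2 * ε ^ 2 * m') / (K ^ 2 * Δ ^ 2) := by
    have hK0 : K ≠ 0 := by positivity
    simp only [sub_zero, Finset.sum_const, Finset.card_univ, Fintype.card_fin, nsmul_eq_mul]
    push_cast
    rw [Real.norm_of_nonneg hKΔ.le]
    field_simp
  have h1 := hS.measure_ge_le hε'
  have h2 := hS.neg.measure_ge_le hε'
  rw [hexp] at h1 h2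
  have hsubset : {ω | ε ≤ |(m' : ℝ)⁻¹ * (∑ k : Fin m',
          |uniformQuantizer Δ (X (W k ω).1.1 (W k ω).1.2 + (W k ω).2)
            - uniformQuantizer Δ (Y (W k ω).1.1 (W k ω).1.2 + (W k ω).2)|) - μ|}
      ⊆ {ω | m' * ε ≤ ∑ k, Z k ω} ∪ {ω | m' * ε ≤ (-fun ω => ∑ k, Z k ω) ω} := by
    intro ω hω
    simp only [Set.mem_setOf_eq] at hω
    have he : ∑ k, Z k ω = m' * ((m' : ℝ)⁻¹ * (∑ k : Fin m',
          |uniformQuantizer Δ (X (W k ω).1.1 (W k ω).1.2 + (W k ω).2)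
            - uniformQuantizer Δ (Y (W k ω).1.1 (W k ω).1.2 + (W k ω).2)|) - μ) := by
      simp only [hZ, sqF, Finset.sum_sub_distrib, Finset.sum_const, Finset.card_univ,
        Fintype.card_fin, nsmul_eq_mul]
      field_simp
    simp only [Set.mem_union, Set.mem_setOf_eq, Pi.neg_apply, he]
    rcases le_abs.mp hω with h | h
    · exact Or.inl (mul_le_mul_of_nonneg_left h hmR.le)
    · right
      rw [← mul_neg]
      exact mul_le_mul_of_nonneg_left h hmR.le
  rw [← ofReal_measureReal]
  apply ENNReal.ofReal_le_ofReal
  calc _ ≤ P.real ({ω | m' * ε ≤ ∑ k, Z k ω} ∪ {ω | m' * ε ≤ (-fun ω => ∑ k, Z k ω) ω}) :=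
        measureReal_mono hsubset
    _ ≤ _ := measureReal_union_le _ _
    _ ≤ _ := by linarith
end

section
/- Let Δ > 0, let X, Y be real n₁×n₂ matrices with all entries of X and of Y bounded in absolute value by Δ/2. Let (i₁,j₁),…,(i_{m'},j_{m'}) be i.i.d. indices uniformly distributed on [n₁]×[n₂] and τ₁,…,τ_{m'} be i.i.d. uniform on [-Δ/2, Δ/2], independent of the indices. Then for every ε > 0, P( | (1/m') Σ_{k=1}^{m'} (Δ/2)·|sgn(X_{i_k,j_k} + τ_k) - sgn(Y_{i_k,j_k} + τ_k)| − (1/(n₁n₂)) ‖X - Y‖₁ | ≥ ε ) ≤ 2 exp( −2 ε² m' / Δ² ). -/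
open MeasureTheory ProbabilityTheory

lemma my_measurable_sign : Measurable Real.sign := by
  unfold Real.sign
  refine Measurable.ite measurableSet_Iio measurable_const ?_
  exact Measurable.ite measurableSet_Ioi measurable_const measurable_const

lemma sign_mem (r : ℝ) : -1 ≤ Real.sign r ∧ Real.sign r ≤ 1 := by
  rcases Real.sign_apply_eq r with h | h | h <;> rw [h] <;> norm_num

lemma sign_diff_eq (x y t : ℝ) (h1 : t ≠ -x) (h2 : t ≠ -y) :
    |Real.sign (x + t) - Real.sign (y + t)| = (Set.uIoc (-x) (-y)).indicator (fun _ => (2:ℝ)) t := by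
  have h1' : x + t ≠ 0 := fun h => h1 (by linarith)
  have h2' : y + t ≠ 0 := fun h => h2 (by linarith)
  simp only [Set.indicator, Set.mem_uIoc]
  rcases lt_or_gt_of_ne h1' with a | a <;> rcases lt_or_gt_of_ne h2' with b | b
  · rw [Real.sign_of_neg a, Real.sign_of_neg b, if_neg]
    · norm_num
    · rintro (⟨_, _⟩ | ⟨_, _⟩) <;> linarith
  · rw [Real.sign_of_neg a, Real.sign_of_pos b, if_pos]
    · norm_num
    · right; constructor <;> linarith
  · rw [Real.sign_of_pos a, Real.sign_of_neg b, if_pos]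
    · norm_num
    · left; constructor <;> linarith
  · rw [Real.sign_of_pos a, Real.sign_of_pos b, if_neg]
    · norm_num
    · rintro (⟨_, _⟩ | ⟨_, _⟩) <;> linarith

lemma integral_dither (Δ : ℝ) (hΔ : 0 < Δ) (x y : ℝ) (hx : |x| ≤ Δ / 2) (hy : |y| ≤ Δ / 2) :
    ∫ t, Δ / 2 * |Real.sign (x + t) - Real.sign (y + t)| ∂(uniformDither Δ) = |x - y| := by
  rw [uniformDither, integral_smul_measure, integral_const_mul]
  have hae : (fun t => |Real.sign (x + t) - Real.sign (y + t)|) =ᵐ[volume]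
      (Set.uIoc (-x) (-y)).indicator (fun _ => (2:ℝ)) := by
    have e : ∀ a : ℝ, ∀ᵐ t : ℝ, t ≠ a := fun a => by simp [ae_iff]
    filter_upwards [e (-x), e (-y)] with t h1 h2 using sign_diff_eq x y t h1 h2
  rw [integral_congr_ae (ae_restrict_of_ae hae), integral_indicator measurableSet_uIoc,
    Measure.restrict_restrict measurableSet_uIoc, Set.inter_eq_left.mpr]
  · rw [setIntegral_const, measureReal_def, Real.volume_uIoc]
    rw [abs_sub_comm x y, ENNReal.toReal_ofReal (abs_nonneg _), ENNReal.toReal_inv,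
      ENNReal.toReal_ofReal hΔ.le]
    simp only [smul_eq_mul]
    rw [show -y - -x = -(y - x) by ring, abs_neg]
    field_simp
  · rw [abs_le] at hx hy
    intro t ht
    rw [Set.mem_uIoc] at ht
    rcases ht with ⟨_, _⟩ | ⟨_, _⟩ <;> constructor <;> linarith

lemma prob_dither (Δ : ℝ) (hΔ : 0 < Δ) : IsProbabilityMeasure (uniformDither Δ) := by
  constructor
  simp only [uniformDither, Measure.smul_apply, Measure.restrict_apply_univ, Real.volume_Icc,
    smul_eq_mul]
  rw [show Δ / 2 - -(Δ / 2) = Δ by ring]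
  exact ENNReal.inv_mul_cancel (by simpa using hΔ) ENNReal.ofReal_ne_top

lemma prob_index (n₁ n₂ : ℕ) (hn₁ : 0 < n₁) (hn₂ : 0 < n₂) :
    IsProbabilityMeasure (uniformIndex n₁ n₂) := by
  constructor
  simp only [uniformIndex, Measure.smul_apply, smul_eq_mul]
  rw [Measure.count_apply_finite _ Set.finite_univ]
  simp only [Set.Finite.toFinset_univ, Finset.card_univ, Fintype.card_prod, Fintype.card_fin]
  refine ENNReal.inv_mul_cancel ?_ (ENNReal.natCast_ne_top _)
  have := Nat.mul_pos hn₁ hn₂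
  exact_mod_cast this.ne'

/-- The summand as a function of index and dither. -/
noncomputable def fobs {n₁ n₂ : ℕ} (Δ : ℝ) (X Y : Matrix (Fin n₁) (Fin n₂) ℝ)
    (w : (Fin n₁ × Fin n₂) × ℝ) : ℝ :=
  Δ / 2 * |Real.sign (X w.1.1 w.1.2 + w.2) - Real.sign (Y w.1.1 w.1.2 + w.2)|

lemma fobs_meas {n₁ n₂ : ℕ} (Δ : ℝ) (X Y : Matrix (Fin n₁) (Fin n₂) ℝ) :
    Measurable (fobs Δ X Y) := by
  have h : ∀ X : Matrix (Fin n₁) (Fin n₂) ℝ,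
      Measurable (fun w : (Fin n₁ × Fin n₂) × ℝ => Real.sign (X w.1.1 w.1.2 + w.2)) := by
    intro X
    have h0 : Measurable (fun p : Fin n₁ × Fin n₂ => X p.1 p.2) := measurable_of_countable _
    exact my_measurable_sign.comp ((h0.comp measurable_fst).add measurable_snd)
  have := ((h X).sub (h Y)).abs.const_mul (Δ / 2)
  exact this

lemma fobs_mem {n₁ n₂ : ℕ} (Δ : ℝ) (hΔ : 0 < Δ) (X Y : Matrix (Fin n₁) (Fin n₂) ℝ)
    (w : (Fin n₁ × Fin n₂) × ℝ) : fobs Δ X Y w ∈ Set.Icc 0 Δ := by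
  unfold fobs
  constructor
  · positivity
  · have h1 := sign_mem (X w.1.1 w.1.2 + w.2)
    have h2 := sign_mem (Y w.1.1 w.1.2 + w.2)
    have : |Real.sign (X w.1.1 w.1.2 + w.2) - Real.sign (Y w.1.1 w.1.2 + w.2)| ≤ 2 := by
      rw [abs_le]; constructor <;> linarith
    nlinarith

lemma fobs_integral {n₁ n₂ : ℕ} (hn₁ : 0 < n₁) (hn₂ : 0 < n₂)
    (Δ : ℝ) (hΔ : 0 < Δ) (X Y : Matrix (Fin n₁) (Fin n₂) ℝ)
    (hX : ∀ i j, |X i j| ≤ Δ / 2) (hY : ∀ i j, |Y i j| ≤ Δ / 2) :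
    ∫ w, fobs Δ X Y w ∂((uniformIndex n₁ n₂).prod (uniformDither Δ))
      = ((n₁ : ℝ) * n₂)⁻¹ * matL1 (X - Y) := by
  have := prob_dither Δ hΔ
  have := prob_index n₁ n₂ hn₁ hn₂
  rw [integral_prod _ (Integrable.of_mem_Icc 0 Δ (fobs_meas Δ X Y).aemeasurable
    (Filter.Eventually.of_forall (fobs_mem Δ hΔ X Y)))]
  have : ∀ p : Fin n₁ × Fin n₂, ∫ t, fobs Δ X Y (p, t) ∂(uniformDither Δ)
      = |X p.1 p.2 - Y p.1 p.2| := fun p =>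
    integral_dither Δ hΔ _ _ (hX p.1 p.2) (hY p.1 p.2)
  simp only [this]
  rw [uniformIndex, integral_smul_measure, integral_fintype .of_finite]
  simp [matL1, Fintype.sum_prod_type, measureReal_def, Measure.count_singleton]

/-- Hoeffding-type concentration of the sampled one-bit distance: for matrices with
entries bounded by `Δ/2`, with i.i.d. uniform indices and i.i.d. uniform dithers
independent of the indices (encoded by the i.i.d. family `W k = ((i_k,j_k), τ_k)` with
product distribution), for every `ε > 0`,
`P(|(1/m')Σ_k (Δ/2)|sgn(X+τ) - sgn(Y+τ)| - ‖X-Y‖₁/(n₁n₂)| ≥ ε) ≤ 2 exp(-2ε²m'/Δ²)`. -/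
theorem sampled_one_bit_l1_concentration {n₁ n₂ m' : ℕ} (hn₁ : 0 < n₁) (hn₂ : 0 < n₂)
    (Δ : ℝ) (hΔ : 0 < Δ)
    (X Y : Matrix (Fin n₁) (Fin n₂) ℝ)
    (hX : ∀ i j, |X i j| ≤ Δ / 2) (hY : ∀ i j, |Y i j| ≤ Δ / 2)
    {Ω : Type*} [MeasurableSpace Ω] (P : Measure Ω) [IsProbabilityMeasure P]
    (W : Fin m' → Ω → (Fin n₁ × Fin n₂) × ℝ)
    (hmeas : ∀ k, Measurable (W k))
    (hindep : iIndepFun W P)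
    (hdist : ∀ k, Measure.map (W k) P = (uniformIndex n₁ n₂).prod (uniformDither Δ))
    (ε : ℝ) (hε : 0 < ε) :
    P {ω | ε ≤ |(m' : ℝ)⁻¹ * (∑ k : Fin m',
          Δ / 2 * |Real.sign (X (W k ω).1.1 (W k ω).1.2 + (W k ω).2)
            - Real.sign (Y (W k ω).1.1 (W k ω).1.2 + (W k ω).2)|)
        - ((n₁ : ℝ) * n₂)⁻¹ * matL1 (X - Y)|}
      ≤ ENNReal.ofReal (2 * Real.exp (-(2 * ε ^ 2 * m') / Δ ^ 2)) := by
  rcases Nat.eq_zero_or_pos m' with hm | hm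
  · refine prob_le_one.trans ?_
    rw [ENNReal.one_le_ofReal]
    simp [hm]
  set μ : ℝ := ((n₁ : ℝ) * n₂)⁻¹ * matL1 (X - Y) with hμ
  have hmR : (0 : ℝ) < m' := by exact_mod_cast hm
  set Z : Fin m' → Ω → ℝ := fun k ω => fobs Δ X Y (W k ω) - μ with hZ
  have hfm := fobs_meas Δ X Y
  have hint : ∀ k, ∫ ω, fobs Δ X Y (W k ω) ∂P = μ := by
    intro k
    rw [hμ, ← fobs_integral hn₁ hn₂ Δ hΔ X Y hX hY, ← hdist k,
      integral_map (hmeas k).aemeasurable hfm.aestronglyMeasurable]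
  have hsub : ∀ k, HasSubgaussianMGF (Z k) ((‖Δ - 0‖₊ / 2) ^ 2) P := by
    intro k
    have := hasSubgaussianMGF_of_mem_Icc (μ := P) (X := fun ω => fobs Δ X Y (W k ω)) (a := 0)
      (b := Δ) (hfm.comp (hmeas k)).aemeasurable
      (Filter.Eventually.of_forall fun ω => fobs_mem Δ hΔ X Y (W k ω))
    rw [hint k] at this
    exact this
  have hind : iIndepFun Z P := hindep.comp (fun _ w => fobs Δ X Y w - μ)
    (fun _ => hfm.sub_const _)
  have hindn : iIndepFun (fun k ω => - Z k ω) P := hindep.comp (fun _ w => -(fobs Δ X Y w - μ))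
    (fun _ => (hfm.sub_const _).neg)
  have hε' : (0 : ℝ) ≤ m' * ε := by positivity
  have h1 := HasSubgaussianMGF.measure_sum_ge_le_of_iIndepFun hind (s := Finset.univ)
    (fun k _ => hsub k) hε'
  have h2 := HasSubgaussianMGF.measure_sum_ge_le_of_iIndepFun hindn (s := Finset.univ)
    (fun k _ => (hsub k).neg) hε'
  have hexp : -(m' * ε) ^ 2 / (2 * ((∑ _k : Fin m', (‖Δ - 0‖₊ / 2) ^ 2 : NNReal) : ℝ))
      = -(2 * ε ^ 2 * m') / Δ ^ 2 := by
    simp only [sub_zero, Finset.sum_const, Finset.card_univ, Fintype.card_fin, nsmul_eq_mul]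
    push_cast
    rw [Real.norm_of_nonneg hΔ.le]
    field_simp
  rw [hexp] at h1 h2
  have hkey : {ω | ε ≤ |(m' : ℝ)⁻¹ * (∑ k : Fin m',
          Δ / 2 * |Real.sign (X (W k ω).1.1 (W k ω).1.2 + (W k ω).2)
            - Real.sign (Y (W k ω).1.1 (W k ω).1.2 + (W k ω).2)|) - μ|}
      ⊆ {ω | m' * ε ≤ ∑ k, Z k ω} ∪ {ω | m' * ε ≤ ∑ k, - Z k ω} := by
    intro ω hω
    have hs : ∑ k, Z k ω = m' * ((m' : ℝ)⁻¹ * (∑ k : Fin m', fobs Δ X Y (W k ω)) - μ) := by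
      simp only [hZ, Finset.sum_sub_distrib, Finset.sum_const, Finset.card_univ,
        Fintype.card_fin, nsmul_eq_mul]
      field_simp
    change ε ≤ |(m' : ℝ)⁻¹ * (∑ k : Fin m', fobs Δ X Y (W k ω)) - μ| at hω
    rcases le_abs.mp hω with h | h
    · left
      rw [Set.mem_setOf_eq]
      rw [hs]
      exact mul_le_mul_of_nonneg_left h hmR.le
    · right
      rw [Set.mem_setOf_eq]
      rw [Finset.sum_neg_distrib, hs, ← mul_neg]
      exact mul_le_mul_of_nonneg_left h hmR.le
  refine (measure_mono hkey).trans ?_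
  refine (ENNReal.le_ofReal_iff_toReal_le (measure_ne_top _ _) (by positivity)).mpr ?_
  change P.real _ ≤ _
  refine (measureReal_union_le _ _).trans ?_
  rw [two_mul]
  exact add_le_add h1 h2
end
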